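/- Let 𝓗 be a complex Hilbert space and U a strongly continuous unitary representation of the additive group ℝᵏ⁺ˡ on 𝓗. Let f ∈ 𝓗, C ≥ 0, h₁, …, h_l > 0, and let ρ ∈ L¹(ℝᵏ⁺ˡ) be a nonnegative integrable function with ρ(λ) ≤ C almost everywhere and ρ vanishing almost everywhere outside ℝᵏ × ∏_{j=1}^{l} [−h_j, h_j], such that ⟪f, U(x) f⟫ = ∫_{ℝᵏ⁺ˡ} e^{i x·λ} ρ(λ) dλ for every x ∈ ℝᵏ⁺ˡ. Then for every g ∈ 𝓗: ∫_{ℝᵏ} |⟪f, U(x, 0) g⟫|² dx ≤ (2π)ᵏ (∏_{j=1}^{l} 2h_j) C ‖g‖², where (x,0) ∈ ℝᵏ × ℝˡ denotes the embedding of x ∈ ℝᵏ in the first k coordinates. -/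

import Mathlib

open MeasureTheory
open scoped ENNReal NNReal InnerProductSpace

/-!
The argument is duality. If `⟪Φ x, Φ y⟫ = ∫ e^{i(x - y)·w} dμ(w)` for a finite measure `μ` with
density at most `K` on `ℝᵈ`, then expanding the square turns `‖∫ ψ Φ‖²` into
`∫ |𝓕 ψ (w / 2π)|² dμ(w)`, which by Plancherel is at most `(2π)ᵈ K ‖ψ‖₂²`. Hence `x ↦ ⟪g, Φ x⟫`
pairs with every `ψ` in `L¹ ∩ L²` to at most `(2π)^{d/2} K^{1/2} ‖g‖ ‖ψ‖₂`, and testing against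
truncations of its own conjugate bounds its `L²` norm. The estimate is the case `Φ x = U(-x, 0) f`:
here `μ` is the first marginal of `ρ dλ`, whose density is at most `C` times the volume of the box,
since `ρ ≤ C` is integrated over the box in the last variables.
-/

open Complex (I exp)
open scoped ComplexConjugate FourierTransform SchwartzMap Real

theorem integral_inner_left {𝕜 α E : Type*} [RCLike 𝕜] [NormedAddCommGroup E]
    [InnerProductSpace 𝕜 E] [CompleteSpace E] [NormedSpace ℝ E] [MeasurableSpace α] {μ : Measure α}
    {F : α → E} (hF : Integrable F μ) (c : E) :
    ∫ x, ⟪F x, c⟫_𝕜 ∂μ = ⟪∫ x, F x ∂μ, c⟫_𝕜 := by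
  rw [← inner_conj_symm, ← integral_inner hF, ← integral_conj]
  simp only [inner_conj_symm]

theorem lintegral_enorm_sq_eq_eLpNorm_sq {α E : Type*} [MeasurableSpace α] [NormedAddCommGroup E]
    (μ : Measure α) (φ : α → E) : ∫⁻ x, ‖φ x‖ₑ ^ 2 ∂μ = eLpNorm φ 2 μ ^ 2 := by
  simpa using (eLpNorm_nnreal_pow_eq_lintegral (f := φ) (μ := μ) (p := 2) two_ne_zero).symm

section Plancherel

variable {V E : Type*} [NormedAddCommGroup V] [InnerProductSpace ℝ V] [FiniteDimensional ℝ V]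
  [MeasurableSpace V] [BorelSpace V]
  [NormedAddCommGroup E] [InnerProductSpace ℂ E] {φ : V → E}

theorem continuous_fourier_of_integrable (hφ : Integrable φ) : Continuous (𝓕 φ) :=
  VectorFourier.fourierIntegral_continuous Real.continuous_fourierChar
    (innerSL ℝ).continuous₂ hφ

variable [CompleteSpace E]

theorem fourier_ae_eq_fourier_toLp (hφ₁ : Integrable φ) (hφ₂ : MemLp φ 2) :
    𝓕 φ =ᵐ[volume] (𝓕 (hφ₂.toLp φ) : Lp (α := V) E 2) := by
  refine ae_eq_of_integral_contDiff_smul_eq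
    (continuous_fourier_of_integrable hφ₁).locallyIntegrable
    ((Lp.memLp _).locallyIntegrable one_le_two) fun g hg hg_supp ↦ ?_
  let s : 𝓢(V, ℂ) := (hg_supp.comp_left (g := Complex.ofReal) rfl).toSchwartzMap
    (Complex.ofRealCLM.contDiff.comp hg)
  have hs (x : V) : s x = g x := rfl
  have h_distrib : ∫ x, 𝓕 s x • hφ₂.toLp φ x = ∫ x, s x • 𝓕 (hφ₂.toLp φ) x := by
    simpa using congr($(Lp.fourier_toTemperedDistribution_eq (hφ₂.toLp φ)) s)
  have h_self_adjoint : ∫ x, 𝓕 s x • φ x = ∫ x, s x • 𝓕 φ x := by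
    have := VectorFourier.integral_fourierIntegral_smul_eq_flip (μ := volume) (ν := volume)
      (L := innerₗ V) Real.continuous_fourierChar (innerSL ℝ).continuous₂ s.integrable hφ₁
    rwa [flip_innerₗ] at this
  have h_toLp : ∫ x, 𝓕 s x • hφ₂.toLp φ x = ∫ x, 𝓕 s x • φ x :=
    integral_congr_ae <| hφ₂.coeFn_toLp.mono fun x hx ↦ by simp only [hx]
  simpa [hs] using h_self_adjoint.symm.trans (h_toLp.symm.trans h_distrib)

theorem eLpNorm_fourier_two (hφ₁ : Integrable φ) (hφ₂ : MemLp φ 2) :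
    eLpNorm (𝓕 φ) 2 volume = eLpNorm φ 2 volume := by
  rw [eLpNorm_congr_ae (fourier_ae_eq_fourier_toLp hφ₁ hφ₂), ← Lp.enorm_def, ← Lp.enorm_toLp hφ₂,
    enorm_eq_iff_norm_eq, Lp.norm_fourier_eq]

theorem lintegral_enorm_sq_fourier_smul {r : ℝ} (hr : r ≠ 0) (hφ₁ : Integrable φ)
    (hφ₂ : MemLp φ 2) :
    ∫⁻ w, ‖𝓕 φ (r • w)‖ₑ ^ 2
      = ENNReal.ofReal |(r ^ Module.finrank ℝ V)⁻¹| * ∫⁻ x, ‖φ x‖ₑ ^ 2 := by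
  have hmeas : Measurable fun w ↦ ‖𝓕 φ w‖ₑ ^ 2 :=
    (continuous_fourier_of_integrable hφ₁).enorm.measurable.pow_const 2
  rw [← lintegral_map (g := (r • ·)) hmeas (measurable_const_smul r),
    Measure.map_addHaar_smul _ hr, lintegral_smul_measure, lintegral_enorm_sq_eq_eLpNorm_sq,
    lintegral_enorm_sq_eq_eLpNorm_sq, eLpNorm_fourier_two hφ₁ hφ₂, smul_eq_mul]

end Plancherel

theorem setLIntegral_enorm_sq_le_of_forall_integral_mul_le {𝕜 α : Type*} [RCLike 𝕜]
    [MeasurableSpace α] {μ : Measure α} {F : α → 𝕜} (hF : StronglyMeasurable F)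
    {K : ℝ≥0∞} (hK : ∀ ψ : α → 𝕜, Integrable ψ μ → MemLp ψ 2 μ →
      ‖∫ x, ψ x * F x ∂μ‖ₑ ^ 2 ≤ K * ∫⁻ x, ‖ψ x‖ₑ ^ 2 ∂μ)
    {s : Set α} (hs : MeasurableSet s) (hμs : μ s < ∞) {c : ℝ} (hc : ∀ x ∈ s, ‖F x‖ ≤ c) :
    ∫⁻ x in s, ‖F x‖ₑ ^ 2 ∂μ ≤ K := by
  -- The extremal test function, for which the Cauchy–Schwarz inequality on `s` is an equality.
  let ψ : α → 𝕜 := s.indicator fun x ↦ conj (F x)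
  have : IsFiniteMeasure (μ.restrict s) := ⟨by rwa [Measure.restrict_apply_univ]⟩
  have hψ (p : ℝ≥0∞) : MemLp ψ p μ := (memLp_indicator_iff_restrict hs).2 <|
    .of_bound (RCLike.continuous_conj.comp_stronglyMeasurable hF).aestronglyMeasurable c <|
      (ae_restrict_mem hs).mono fun x hx ↦ (RCLike.norm_conj _).trans_le (hc x hx)
  have h_enorm_sq : ∫⁻ x, ‖ψ x‖ₑ ^ 2 ∂μ = ∫⁻ x in s, ‖F x‖ₑ ^ 2 ∂μ := by
    rw [← lintegral_indicator hs]
    congr with x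
    by_cases hx : x ∈ s <;> simp [ψ, hx]
  have h_mul (x : α) : ψ x * F x = ((‖ψ x‖ ^ 2 : ℝ) : 𝕜) := by
    by_cases hx : x ∈ s <;> simp [ψ, hx, RCLike.conj_mul]
  have h_pairing : ‖∫ x, ψ x * F x ∂μ‖ₑ = ∫⁻ x in s, ‖F x‖ₑ ^ 2 ∂μ := by
    rw [← h_enorm_sq]
    simp_rw [h_mul, integral_ofReal, ← ofReal_norm, ← ENNReal.ofReal_pow (norm_nonneg _)]
    rw [RCLike.norm_ofReal, abs_of_nonneg (by positivity)]
    exact ofReal_integral_eq_lintegral_ofReal ((hψ 2).integrable_norm_pow two_ne_zero)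
      (.of_forall fun x ↦ sq_nonneg ‖ψ x‖)
  have h_finite : ∫⁻ x in s, ‖F x‖ₑ ^ 2 ∂μ ≠ ∞ := h_pairing ▸ enorm_ne_top
  have h_sq := hK ψ (memLp_one_iff_integrable.1 (hψ 1)) (hψ 2)
  rw [h_pairing, h_enorm_sq, sq] at h_sq
  by_cases h_zero : ∫⁻ x in s, ‖F x‖ₑ ^ 2 ∂μ = 0
  · exact h_zero ▸ zero_le
  · exact (ENNReal.mul_le_mul_iff_left h_zero h_finite).1 h_sq

theorem lintegral_enorm_sq_le_of_forall_integral_mul_le {𝕜 α : Type*} [RCLike 𝕜]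
    [MeasurableSpace α] {μ : Measure α} [SigmaFinite μ] {F : α → 𝕜} (hF : StronglyMeasurable F)
    {K : ℝ≥0∞} (hK : ∀ ψ : α → 𝕜, Integrable ψ μ → MemLp ψ 2 μ →
      ‖∫ x, ψ x * F x ∂μ‖ₑ ^ 2 ≤ K * ∫⁻ x, ‖ψ x‖ₑ ^ 2 ∂μ) :
    ∫⁻ x, ‖F x‖ₑ ^ 2 ∂μ ≤ K := by
  let t (n : ℕ) : Set α := {x | ‖F x‖ ≤ n}
  have ht : Monotone t := fun m n hmn x (hx : ‖F x‖ ≤ m) ↦ hx.trans (mod_cast hmn)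
  have ht_univ : ⋃ n, t n = Set.univ :=
    Set.iUnion_eq_univ_iff.2 fun x ↦ exists_nat_ge ‖F x‖
  have hs : Monotone fun n ↦ spanningSets μ n ∩ t n := (monotone_spanningSets μ).inter ht
  have hs_univ : ⋃ n, spanningSets μ n ∩ t n = Set.univ := by
    rw [Set.iUnion_inter_of_monotone (monotone_spanningSets μ) ht, iUnion_spanningSets, ht_univ,
      Set.univ_inter]
  rw [← setLIntegral_univ, ← hs_univ, setLIntegral_iUnion_of_directed _ hs.directed_le]
  refine iSup_le fun n ↦ setLIntegral_enorm_sq_le_of_forall_integral_mul_le hF hK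
    ((measurableSet_spanningSets μ n).inter (measurableSet_le hF.norm.measurable measurable_const))
    ((measure_mono Set.inter_subset_left).trans_lt (measure_spanningSets_lt_top μ n))
    fun x hx ↦ hx.2

section FourierPowerSpectrum

variable {V : Type*} [NormedAddCommGroup V] [InnerProductSpace ℝ V] [FiniteDimensional ℝ V]
  [MeasurableSpace V] [BorelSpace V]

theorem fourier_inv_two_pi_smul {E : Type*} [NormedAddCommGroup E] [NormedSpace ℂ E] (ψ : V → E)
    (w : V) : 𝓕 ψ ((2 * π)⁻¹ • w) = ∫ x, exp (-(⟪x, w⟫_ℝ * I)) • ψ x := by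
  rw [Real.fourier_eq']
  congr with x
  rw [real_inner_smul_right, ← mul_assoc, show -2 * π * (2 * π)⁻¹ = -1 by field_simp]
  simp

theorem integral_integral_conj_mul_charFun_sub {μ : Measure V} [IsFiniteMeasure μ]
    {ψ : V → ℂ} (hψ : Integrable ψ) :
    ∫ x, ∫ y, conj (ψ x) * ψ y * charFun μ (x - y)
      = ∫ w, (‖𝓕 ψ ((2 * π)⁻¹ • w)‖ ^ 2 : ℂ) ∂μ := by
  let e (x w : V) : ℂ := exp (-(⟪x, w⟫_ℝ * I))
  have he (x y w : V) : exp (⟪w, x - y⟫_ℝ * I) = conj (e x w) * e y w := by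
    simp only [e, ← Complex.exp_conj, ← Complex.exp_add, inner_sub_right, real_inner_comm w]
    congr 1
    simp [sub_eq_add_neg]
    ring
  have he_norm (x w : V) : ‖e x w‖ = 1 := by
    simpa [e] using Complex.norm_exp_ofReal_mul_I (-⟪x, w⟫_ℝ)
  let T (p : V × V) (w : V) : ℂ := conj (e p.1 w * ψ p.1) * (e p.2 w * ψ p.2)
  have hT : Integrable (Function.uncurry T) ((volume.prod volume).prod μ) := by
    have hψψ : Integrable (fun q : (V × V) × V ↦ conj (ψ q.1.1) * ψ q.1.2)
        ((volume.prod volume).prod μ) :=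
      ((Complex.conjCLE.toContinuousLinearMap.integrable_comp hψ).mul_prod hψ).comp_fst μ
    refine (hψψ.bdd_mul (c := 1) (f := fun q ↦ conj (e q.1.1 q.2) * e q.1.2 q.2)
      (by fun_prop) (.of_forall fun q ↦ by simp [he_norm])).congr (.of_forall fun q ↦ ?_)
    simp only [T, Function.uncurry, map_mul]
    ring
  calc ∫ x, ∫ y, conj (ψ x) * ψ y * charFun μ (x - y)
      = ∫ x, ∫ y, ∫ w, T (x, y) w ∂μ := by
        congr with x
        congr with y
        rw [charFun_apply, ← integral_const_mul]
        congr with w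
        simp only [T, he, map_mul]
        ring
    _ = ∫ p, ∫ w, T p w ∂μ := (integral_prod _ hT.integral_prod_left).symm
    _ = ∫ w, ∫ p, T p w ∂volume.prod volume ∂μ := integral_integral_swap hT
    _ = ∫ w, (‖𝓕 ψ ((2 * π)⁻¹ • w)‖ ^ 2 : ℂ) ∂μ := by
        congr with w
        rw [integral_prod_mul (fun x ↦ conj (e x w * ψ x)) (fun y ↦ e y w * ψ y), integral_conj,
          Complex.conj_mul', fourier_inv_two_pi_smul]
        simp only [e, smul_eq_mul]

end FourierPowerSpectrum

section Spectral

variable {V H : Type*} [NormedAddCommGroup V] [InnerProductSpace ℝ V] [MeasurableSpace V]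
  {μ : Measure V} [NormedAddCommGroup H] [InnerProductSpace ℂ H]

/-- The vector-valued function `Φ` is a wide-sense stationary field with spectral measure `μ`: its
covariance kernel depends only on `x - y` and is the Fourier transform of `μ`. The order of the
arguments is that of an orbit `Φ x = U (-x) f` of a unitary representation, for which
`⟪Φ x, Φ y⟫ = ⟪f, U (x - y) f⟫`. -/
def HasSpectralMeasure (Φ : V → H) (μ : Measure V) : Prop :=
  ∀ x y, ⟪Φ x, Φ y⟫_ℂ = charFun μ (x - y)

namespace HasSpectralMeasure

variable {Φ : V → H}

theorem norm_eq (h : HasSpectralMeasure Φ μ) (x y : V) : ‖Φ x‖ = ‖Φ y‖ := by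
  rw [@norm_eq_sqrt_re_inner ℂ, @norm_eq_sqrt_re_inner ℂ, h, h, sub_self, sub_self]

theorem norm_sub_sq (h : HasSpectralMeasure Φ μ) (x y : V) :
    ‖Φ x - Φ y‖ ^ 2 = 2 * (charFun μ 0 - charFun μ (x - y)).re := by
  have hxy : (charFun μ (y - x)).re = (charFun μ (x - y)).re := by
    rw [← neg_sub, charFun_neg, Complex.conj_re]
  rw [← inner_self_eq_norm_sq (𝕜 := ℂ), inner_sub_left, inner_sub_right, inner_sub_right,
    h, h, h, h, sub_self, sub_self]
  simp only [RCLike.re_to_complex, Complex.sub_re, hxy]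
  ring

theorem coe_completion (h : HasSpectralMeasure Φ μ) :
    HasSpectralMeasure (fun x ↦ (Φ x : UniformSpace.Completion H)) μ := fun x y ↦ by
  rw [UniformSpace.Completion.inner_coe, h]

theorem continuous [BorelSpace V] [SecondCountableTopology V] [IsFiniteMeasure μ]
    (h : HasSpectralMeasure Φ μ) : Continuous Φ := by
  refine continuous_iff_continuousAt.2 fun y ↦ tendsto_iff_norm_sub_tendsto_zero.2 ?_
  have h_sq : Continuous fun x ↦ √(2 * (charFun μ 0 - charFun μ (x - y)).re) := by fun_prop
  refine (h_sq.tendsto' y 0 (by simp)).congr fun x ↦ ?_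
  rw [← h.norm_sub_sq, Real.sqrt_sq (norm_nonneg _)]

variable [FiniteDimensional ℝ V] [BorelSpace V] {ψ : V → ℂ}

theorem integrable_smul [IsFiniteMeasure μ] (h : HasSpectralMeasure Φ μ) (hψ : Integrable ψ) :
    Integrable fun x ↦ ψ x • Φ x :=
  hψ.smul_bdd ‖Φ 0‖ h.continuous.aestronglyMeasurable (.of_forall fun x ↦ (h.norm_eq x 0).le)

section CompleteSpace

variable [CompleteSpace H]

theorem enorm_integral_smul_sq_le [IsFiniteMeasure μ] (h : HasSpectralMeasure Φ μ)
    (hψ : Integrable ψ) :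
    ‖∫ x, ψ x • Φ x‖ₑ ^ 2 ≤ ∫⁻ w, ‖𝓕 ψ ((2 * π)⁻¹ • w)‖ₑ ^ 2 ∂μ := by
  have hψΦ := h.integrable_smul hψ
  have h_inner : ((‖∫ x, ψ x • Φ x‖ ^ 2 : ℝ) : ℂ) = ∫ w, (‖𝓕 ψ ((2 * π)⁻¹ • w)‖ ^ 2 : ℂ) ∂μ := by
    rw [← integral_integral_conj_mul_charFun_sub hψ, Complex.ofReal_pow,
      ← Complex.coe_algebraMap, ← inner_self_eq_norm_sq_to_K, ← integral_inner_left hψΦ]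
    congr with x
    rw [← integral_inner hψΦ]
    congr with y
    rw [inner_smul_left, inner_smul_right, h, mul_assoc]
  calc ‖∫ x, ψ x • Φ x‖ₑ ^ 2 = ‖((‖∫ x, ψ x • Φ x‖ ^ 2 : ℝ) : ℂ)‖ₑ := by
        simp [← ofReal_norm]
    _ ≤ ∫⁻ w, ‖(‖𝓕 ψ ((2 * π)⁻¹ • w)‖ ^ 2 : ℂ)‖ₑ ∂μ :=
        h_inner ▸ enorm_integral_le_lintegral_enorm _
    _ = ∫⁻ w, ‖𝓕 ψ ((2 * π)⁻¹ • w)‖ₑ ^ 2 ∂μ := by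
        simp [← ofReal_norm]

theorem enorm_integral_smul_sq_le_of_le_smul_volume [IsFiniteMeasure μ]
    (h : HasSpectralMeasure Φ μ) {K : ℝ≥0∞} (hμ : μ ≤ K • volume) (hψ₁ : Integrable ψ)
    (hψ₂ : MemLp ψ 2) :
    ‖∫ x, ψ x • Φ x‖ₑ ^ 2
      ≤ ENNReal.ofReal ((2 * π) ^ Module.finrank ℝ V) * K * ∫⁻ x, ‖ψ x‖ₑ ^ 2 :=
  calc ‖∫ x, ψ x • Φ x‖ₑ ^ 2 ≤ ∫⁻ w, ‖𝓕 ψ ((2 * π)⁻¹ • w)‖ₑ ^ 2 ∂μ :=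
        h.enorm_integral_smul_sq_le hψ₁
    _ ≤ K * ∫⁻ w, ‖𝓕 ψ ((2 * π)⁻¹ • w)‖ₑ ^ 2 := by
        grw [hμ, lintegral_smul_measure, smul_eq_mul]
    _ = ENNReal.ofReal ((2 * π) ^ Module.finrank ℝ V) * K * ∫⁻ x, ‖ψ x‖ₑ ^ 2 := by
        rw [lintegral_enorm_sq_fourier_smul (by positivity) hψ₁ hψ₂, inv_pow, inv_inv,
          abs_of_nonneg (by positivity)]
        ring

theorem lintegral_enorm_inner_sq_le_of_completeSpace [IsFiniteMeasure μ]
    (h : HasSpectralMeasure Φ μ) {K : ℝ≥0∞} (hμ : μ ≤ K • volume) (g : H) :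
    ∫⁻ x, ‖⟪g, Φ x⟫_ℂ‖ₑ ^ 2
      ≤ ENNReal.ofReal ((2 * π) ^ Module.finrank ℝ V) * K * ‖g‖ₑ ^ 2 := by
  refine lintegral_enorm_sq_le_of_forall_integral_mul_le
    (continuous_const.inner h.continuous).stronglyMeasurable fun ψ hψ₁ hψ₂ ↦ ?_
  calc ‖∫ x, ψ x * ⟪g, Φ x⟫_ℂ‖ₑ ^ 2 = ‖⟪g, ∫ x, ψ x • Φ x⟫_ℂ‖ₑ ^ 2 := by
        simp_rw [← integral_inner (h.integrable_smul hψ₁), inner_smul_right]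
    _ ≤ (‖g‖ₑ * ‖∫ x, ψ x • Φ x‖ₑ) ^ 2 := by
        gcongr
        exact ENNReal.coe_le_coe.2 (nnnorm_inner_le_nnnorm g _)
    _ ≤ ‖g‖ₑ ^ 2 * (ENNReal.ofReal ((2 * π) ^ Module.finrank ℝ V) * K * ∫⁻ x, ‖ψ x‖ₑ ^ 2) := by
        rw [mul_pow]
        gcongr
        exact h.enorm_integral_smul_sq_le_of_le_smul_volume hμ hψ₁ hψ₂
    _ = _ := by ring

end CompleteSpace

-- The vector-valued integrals in the duality argument only exist in the completion of `H`.
theorem lintegral_enorm_inner_sq_le [IsFiniteMeasure μ] (h : HasSpectralMeasure Φ μ) {K : ℝ≥0∞}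
    (hμ : μ ≤ K • volume) (g : H) :
    ∫⁻ x, ‖⟪Φ x, g⟫_ℂ‖ₑ ^ 2
      ≤ ENNReal.ofReal ((2 * π) ^ Module.finrank ℝ V) * K * ‖g‖ₑ ^ 2 := by
  simpa only [UniformSpace.Completion.inner_coe, UniformSpace.Completion.norm_coe, ← ofReal_norm,
    norm_inner_symm g] using h.coe_completion.lintegral_enorm_inner_sq_le_of_completeSpace hμ g

end HasSpectralMeasure

end Spectral

section Marginal

variable {α β : Type*} [MeasurableSpace α] [MeasurableSpace β] {μ : Measure α} {ν : Measure β}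

theorem map_fst_withDensity_le [SFinite μ] [SFinite ν] {ρ : α × β → ℝ≥0∞} {c : ℝ≥0∞} {B : Set β}
    (hB : MeasurableSet B) (hρ : ∀ᵐ z ∂μ.prod ν, ρ z ≤ c)
    (hρB : ∀ᵐ z ∂μ.prod ν, ρ z ≠ 0 → z.2 ∈ B) :
    ((μ.prod ν).withDensity ρ).map Prod.fst ≤ (c * ν B) • μ := by
  have h_strip : μ.prod (ν.restrict B) = (μ.prod ν).restrict (Set.univ ×ˢ B) := by
    rw [← Measure.prod_restrict, Measure.restrict_univ]
  have h_le : (μ.prod ν).withDensity ρ ≤ c • μ.prod (ν.restrict B) := by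
    rw [h_strip, ← withDensity_const, ← withDensity_indicator (MeasurableSet.univ.prod hB)]
    refine withDensity_mono ?_
    filter_upwards [hρ, hρB] with z hz hzB
    by_cases h0 : ρ z = 0
    · simp [h0]
    · simpa [hzB h0] using hz
  calc ((μ.prod ν).withDensity ρ).map Prod.fst
      ≤ (c • μ.prod (ν.restrict B)).map Prod.fst := Measure.map_mono h_le measurable_fst
    _ = (c * ν B) • μ := by
        rw [Measure.map_smul, Measure.map_fst_prod, Measure.restrict_apply_univ, smul_smul]

theorem charFun_map_fst_withDensity_ofReal {V : Type*} [NormedAddCommGroup V]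
    [InnerProductSpace ℝ V] [MeasurableSpace V] [BorelSpace V] {ν : Measure (V × β)}
    {ρ : V × β → ℝ} (hρ : AEMeasurable ρ ν) (hρ0 : 0 ≤ᵐ[ν] ρ) (x : V) :
    charFun ((ν.withDensity fun z ↦ ENNReal.ofReal (ρ z)).map Prod.fst) x
      = ∫ z, exp (⟪z.1, x⟫_ℝ * I) * ρ z ∂ν := by
  have h_exp : Continuous fun v : V ↦ exp (⟪v, x⟫_ℝ * I) := by fun_prop
  rw [charFun_apply, integral_map measurable_fst.aemeasurable
      h_exp.measurable.aestronglyMeasurable,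
    integral_withDensity_eq_integral_toReal_smul₀ hρ.ennreal_ofReal
      (.of_forall fun _ ↦ ENNReal.ofReal_lt_top)]
  refine integral_congr_ae (hρ0.mono fun z (hz : 0 ≤ ρ z) ↦ ?_)
  simp only [ENNReal.toReal_ofReal hz, Complex.real_smul, mul_comm]

end Marginal

theorem inner_apply_neg_left {𝕜 G H : Type*} [RCLike 𝕜] [AddGroup G] [NormedAddCommGroup H]
    [InnerProductSpace 𝕜 H] {U : G → H →L[𝕜] H} (hU0 : U 0 = 1)
    (hUadd : ∀ x y, U (x + y) = (U x).comp (U y))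
    (hUunitary : ∀ x, ∀ v w : H, ⟪U x v, U x w⟫_𝕜 = ⟪v, w⟫_𝕜) (x : G) (v w : H) :
    ⟪U (-x) v, w⟫_𝕜 = ⟪v, U x w⟫_𝕜 := by
  rw [← hUunitary x, ← ContinuousLinearMap.comp_apply, ← hUadd, add_neg_cancel, hU0,
    one_apply_eq_self]

theorem measurableSet_setOf_forall_abs_le {ι : Type*} [Finite ι] (h : ι → ℝ) :
    MeasurableSet {y : EuclideanSpace ℝ ι | ∀ j, |y j| ≤ h j} := by
  measurability

theorem volume_setOf_forall_abs_le {ι : Type*} [Fintype ι] {h : ι → ℝ} (hh : ∀ j, 0 ≤ h j) :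
    volume {y : EuclideanSpace ℝ ι | ∀ j, |y j| ≤ h j} = ENNReal.ofReal (∏ j, 2 * h j) := by
  have h_box : {y : EuclideanSpace ℝ ι | ∀ j, |y j| ≤ h j} = WithLp.ofLp ⁻¹' Set.Icc (-h) h := by
    ext y
    simp [abs_le, Pi.le_def, forall_and]
  rw [h_box, (PiLp.volume_preserving_ofLp ι).measure_preimage measurableSet_Icc.nullMeasurableSet,
    Real.volume_Icc_pi, ENNReal.ofReal_prod_of_nonneg fun j _ ↦ mul_nonneg zero_le_two (hh j)]
  simp [two_mul]

theorem smoothness_estimate_bounded_energy_general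
    {𝓗 V W : Type*} [NormedAddCommGroup 𝓗] [InnerProductSpace ℂ 𝓗]
    [NormedAddCommGroup V] [InnerProductSpace ℝ V] [FiniteDimensional ℝ V]
    [MeasurableSpace V] [BorelSpace V]
    [NormedAddCommGroup W] [InnerProductSpace ℝ W] [FiniteDimensional ℝ W]
    [MeasurableSpace W] [BorelSpace W]
    {U : V × W → 𝓗 →L[ℂ] 𝓗} (hU0 : U 0 = 1) (hUadd : ∀ x y, U (x + y) = (U x).comp (U y))
    (hUunitary : ∀ x, ∀ v w : 𝓗, ⟪U x v, U x w⟫_ℂ = ⟪v, w⟫_ℂ)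
    {f : 𝓗} {C : ℝ} {B : Set W} (hB : MeasurableSet B) (hB_top : volume B ≠ ∞)
    {ρ : V × W → ℝ} (hρint : Integrable ρ)
    (hρ0 : ∀ᵐ lam, 0 ≤ ρ lam) (hρC : ∀ᵐ lam, ρ lam ≤ C) (hρB : ∀ᵐ lam, ρ lam ≠ 0 → lam.2 ∈ B)
    (hspec : ∀ x, ⟪f, U x f⟫_ℂ =
      ∫ lam, exp (I * ((⟪x.1, lam.1⟫_ℝ + ⟪x.2, lam.2⟫_ℝ : ℝ) : ℂ)) * (ρ lam : ℂ)) (g : 𝓗) :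
    ∫⁻ x : V, ‖⟪f, U (x, 0) g⟫_ℂ‖ₑ ^ 2
      ≤ ENNReal.ofReal ((2 * π) ^ Module.finrank ℝ V * volume.real B * C * ‖g‖ ^ 2) := by
  let μ : Measure V := (volume.withDensity fun lam ↦ ENNReal.ofReal (ρ lam)).map Prod.fst
  have := isFiniteMeasure_withDensity_ofReal hρint.hasFiniteIntegral
  have hμ : μ ≤ (ENNReal.ofReal C * volume B) • volume :=
    map_fst_withDensity_le hB (hρC.mono fun lam ↦ ENNReal.ofReal_le_ofReal)
      (hρB.mono fun lam hlam h0 ↦ hlam fun h ↦ h0 (by simp [h]))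
  have h_adj (x : V) (v w : 𝓗) : ⟪U (-x, 0) v, w⟫_ℂ = ⟪v, U (x, 0) w⟫_ℂ := by
    simpa using inner_apply_neg_left hU0 hUadd hUunitary (x, 0) v w
  have hΦ : HasSpectralMeasure (fun x ↦ U (-x, 0) f) μ := by
    intro x y
    rw [h_adj, ← ContinuousLinearMap.comp_apply, ← hUadd,
      hspec, charFun_map_fst_withDensity_ofReal hρint.aemeasurable hρ0]
    simp [real_inner_comm, mul_comm I, sub_eq_add_neg]
  calc ∫⁻ x, ‖⟪f, U (x, 0) g⟫_ℂ‖ₑ ^ 2 = ∫⁻ x, ‖⟪U (-x, 0) f, g⟫_ℂ‖ₑ ^ 2 := by simp only [h_adj]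
    _ ≤ ENNReal.ofReal ((2 * π) ^ Module.finrank ℝ V) * (ENNReal.ofReal C * volume B) * ‖g‖ₑ ^ 2 :=
        hΦ.lintegral_enorm_inner_sq_le hμ g
    _ = ENNReal.ofReal ((2 * π) ^ Module.finrank ℝ V * volume.real B * C * ‖g‖ ^ 2) := by
        rw [ENNReal.ofReal_mul' (by positivity), ENNReal.ofReal_mul (by positivity),
          ENNReal.ofReal_mul (by positivity), ofReal_measureReal hB_top,
          ENNReal.ofReal_pow (norm_nonneg g), ofReal_norm]
        ring

/-- Bounded-energy smoothness estimate: if `U` is a strongly continuous unitary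
representation of `ℝᵏ⁺ˡ = ℝᵏ × ℝˡ` on a complex Hilbert space and `f` has absolutely
continuous spectral measure with density `ρ ≤ C` supported in `ℝᵏ × ∏_j [−h_j, h_j]`
(expressed via `⟪f, U(x) f⟫ = ∫ e^{i x·λ} ρ(λ) dλ`), then for every `g`:
`∫_{ℝᵏ} |⟪f, U(x, 0) g⟫|² dx ≤ (2π)ᵏ (∏_j 2 h_j) C ‖g‖²`. -/
theorem smoothness_estimate_bounded_energy
    {𝓗 : Type*} [NormedAddCommGroup 𝓗] [InnerProductSpace ℂ 𝓗]
    (k l : ℕ)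
    (U : EuclideanSpace ℝ (Fin k) × EuclideanSpace ℝ (Fin l) → (𝓗 →L[ℂ] 𝓗))
    (hU0 : U 0 = 1)
    (hUadd : ∀ x y, U (x + y) = (U x).comp (U y))
    (hUunitary : ∀ x, ∀ v w : 𝓗, ⟪U x v, U x w⟫_ℂ = ⟪v, w⟫_ℂ)
    (hUcont : ∀ v : 𝓗, Continuous fun x => U x v)
    (f : 𝓗) (C : ℝ) (hC : 0 ≤ C)
    (h : Fin l → ℝ) (hh : ∀ j, 0 < h j)
    (ρ : EuclideanSpace ℝ (Fin k) × EuclideanSpace ℝ (Fin l) → ℝ)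
    (hρint : Integrable ρ)
    (hρ0 : ∀ᵐ lam ∂(volume : Measure (EuclideanSpace ℝ (Fin k) × EuclideanSpace ℝ (Fin l))),
      0 ≤ ρ lam)
    (hρC : ∀ᵐ lam ∂(volume : Measure (EuclideanSpace ℝ (Fin k) × EuclideanSpace ℝ (Fin l))),
      ρ lam ≤ C)
    (hρsupp : ∀ᵐ lam ∂(volume : Measure (EuclideanSpace ℝ (Fin k) × EuclideanSpace ℝ (Fin l))),
      ρ lam ≠ 0 → ∀ j, |lam.2 j| ≤ h j)
    (hspec : ∀ x, ⟪f, U x f⟫_ℂ =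
      ∫ lam, Complex.exp (Complex.I * ((⟪x.1, lam.1⟫_ℝ + ⟪x.2, lam.2⟫_ℝ : ℝ) : ℂ)) * (ρ lam : ℂ)) :
    ∀ g : 𝓗,
      ∫⁻ x : EuclideanSpace ℝ (Fin k), (‖⟪f, U (x, 0) g⟫_ℂ‖₊ : ℝ≥0∞) ^ 2
        ≤ ENNReal.ofReal ((2 * Real.pi) ^ k * (∏ j, 2 * h j) * C * ‖g‖ ^ 2) := by
  intro g
  have h_vol := volume_setOf_forall_abs_le fun j ↦ (hh j).le
  have h_nonneg : 0 ≤ ∏ j, 2 * h j := Finset.prod_nonneg fun j _ ↦ by linarith [hh j]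
  simpa [enorm_eq_nnnorm, Measure.real, h_vol, h_nonneg] using
    smoothness_estimate_bounded_energy_general hU0 hUadd hUunitary
      (measurableSet_setOf_forall_abs_le h) (h_vol ▸ ENNReal.ofReal_ne_top) hρint hρ0 hρC hρsupp
      hspec g
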